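/- For every M > 0 there exists a two-bidder single-item auction instance with correlated values such that the supremum of revenue over Bayesian incentive compatible, ex post individually rational auctions is at least M times the supremum of revenue over dominant strategy incentive compatible, ex post individually rational auctions. -/

import Mathlib

open MeasureTheory Set

/-!
Draw a value `2 ^ k` for the first bidder with probability proportional to `2 ^ (-k)`, `k ≤ n`, and
a uniformly random set `s ⊆ {0, …, n}` containing `k`; the second bidder's value, in `[0, 1]`,
merely encodes `s`.

Selling to the first bidder at half the reported value exactly when the reported exponent lies in
`s` is Bayesian incentive compatible: a truthful bidder always wins and keeps half of the value,
whereas `s` contains any other exponent with probability at most `1 / 2`. This auction extracts half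
of the first bidder's expected value, to which all `n + 1` exponents contribute equally.

Under dominant strategy incentive compatibility the first bidder faces a truthful mechanism for each
fixed `s`. The values that `s` leaves possible keep their equal-revenue weights `2 ^ (-k)`, against
which a truthful mechanism collects a bounded amount, independently of `n`.
-/

/-- Feasibility of a two-bidder allocation rule on nonnegative profiles. -/
def IsFeasible (x₁ x₂ : ℝ × ℝ → ℝ) : Prop :=
  ∀ t : ℝ × ℝ, 0 ≤ t.1 → 0 ≤ t.2 → 0 ≤ x₁ t ∧ 0 ≤ x₂ t ∧ x₁ t + x₂ t ≤ 1

/-- Ex post individual rationality of a two-bidder auction on nonnegative profiles. -/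
def IsExPostIR (x₁ x₂ p₁ p₂ : ℝ × ℝ → ℝ) : Prop :=
  ∀ t : ℝ × ℝ, 0 ≤ t.1 → 0 ≤ t.2 → 0 ≤ t.1 * x₁ t - p₁ t ∧ 0 ≤ t.2 * x₂ t - p₂ t

/-- Bayesian incentive compatibility of a two-bidder auction under the prior `D`, tested against
measurable misreporting strategies instead of conditioning on a bidder's own type. -/
def IsBIC (D : Measure (ℝ × ℝ)) (x₁ x₂ p₁ p₂ : ℝ × ℝ → ℝ) : Prop :=
  (∀ σ : ℝ → ℝ, Measurable σ → (∀ v, 0 ≤ σ v) →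
    ∫ t, (t.1 * x₁ (σ t.1, t.2) - p₁ (σ t.1, t.2)) ∂D ≤ ∫ t, (t.1 * x₁ t - p₁ t) ∂D) ∧
  (∀ σ : ℝ → ℝ, Measurable σ → (∀ v, 0 ≤ σ v) →
    ∫ t, (t.2 * x₂ (t.1, σ t.2) - p₂ (t.1, σ t.2)) ∂D ≤ ∫ t, (t.2 * x₂ t - p₂ t) ∂D)

/-- Dominant strategy incentive compatibility for the first bidder, with allocation `y` and
payment `q`. -/
def IsFstDSIC (y q : ℝ × ℝ → ℝ) : Prop :=
  ∀ t : ℝ × ℝ, 0 ≤ t.1 → 0 ≤ t.2 → ∀ v' : ℝ, 0 ≤ v' →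
    t.1 * y (v', t.2) - q (v', t.2) ≤ t.1 * y t - q t

theorem payment_div_le_two_mul_sub {y y' q q' v w : ℝ} (hv : 0 < v) (hvw : 2 * v ≤ w)
    (hq : 0 ≤ q) (hic : w * y - q ≤ w * y' - q') :
    q / v ≤ 2 * ((y' - q' / w) - (y - q / v)) := by
  have hw : 0 < w := by linarith
  have hdev : y - q / w ≤ y' - q' / w := by
    have := div_le_div_of_nonneg_right hic hw.le
    rwa [sub_div, sub_div, mul_div_cancel_left₀ _ hw.ne', mul_div_cancel_left₀ _ hw.ne'] at this
  have hhalf : q / w ≤ q / v / 2 := by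
    rw [div_div, mul_comm v]
    gcongr
  linarith

section SingleBidder

variable {y q : ℝ → ℝ} {v : ℕ → ℝ}

theorem sum_range_payment_div_le_two (hy : ∀ r, 0 ≤ r → y r ∈ Icc 0 1) (hq_zero : q 0 = 0)
    (hic : ∀ r, 0 ≤ r → ∀ r', 0 ≤ r' → r * y r' - q r' ≤ r * y r - q r)
    (hv : ∀ k, 0 < v k) (hv_double : ∀ k, 2 * v k ≤ v (k + 1)) (n : ℕ) :
    ∑ k ∈ Finset.range n, q (v k) / v k ≤ 2 := by
  have hq (r : ℝ) (hr : 0 ≤ r) : 0 ≤ q r := by linarith [hic 0 le_rfl r hr]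
  -- Telescope the utility per unit of value, which always lies in `[0, 1]`.
  set a : ℕ → ℝ := fun k => y (v k) - q (v k) / v k
  have ha_zero : 0 ≤ a 0 := by
    have hzero := hic (v 0) (hv 0).le 0 le_rfl
    have hutil : 0 ≤ v 0 * y 0 := mul_nonneg (hv 0).le (hy 0 le_rfl).1
    rw [sub_nonneg, div_le_iff₀' (hv 0)]
    linarith
  have ha_le_one : a n ≤ 1 :=
    (sub_le_self _ (div_nonneg (hq _ (hv n).le) (hv n).le)).trans (hy _ (hv n).le).2
  calc ∑ k ∈ Finset.range n, q (v k) / v k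
      ≤ ∑ k ∈ Finset.range n, 2 * (a (k + 1) - a k) := Finset.sum_le_sum fun k _ =>
        payment_div_le_two_mul_sub (hv k) (hv_double k) (hq _ (hv k).le)
          (hic _ (hv (k + 1)).le _ (hv k).le)
    _ = 2 * (a n - a 0) := by rw [← Finset.mul_sum, Finset.sum_range_sub]
    _ ≤ 2 := by linarith

theorem sum_payment_div_le_two (hy : ∀ r, 0 ≤ r → y r ∈ Icc 0 1) (hq_zero : q 0 ≤ 0)
    (hic : ∀ r, 0 ≤ r → ∀ r', 0 ≤ r' → r * y r' - q r' ≤ r * y r - q r)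
    (hv : ∀ k, 0 < v k) (hv_double : ∀ k, 2 * v k ≤ v (k + 1)) (s : Finset ℕ) :
    ∑ k ∈ s, q (v k) / v k ≤ 2 := by
  obtain ⟨n, hn⟩ := s.exists_nat_subset_range
  have hq (r : ℝ) (hr : 0 ≤ r) : 0 ≤ q r - q 0 := by linarith [hic 0 le_rfl r hr]
  -- Charging `q - q 0` makes all payments nonnegative and lowers none of them.
  calc ∑ k ∈ s, q (v k) / v k
      ≤ ∑ k ∈ s, (q (v k) - q 0) / v k := Finset.sum_le_sum fun k _ =>
        div_le_div_of_nonneg_right (by linarith) (hv k).le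
    _ ≤ ∑ k ∈ Finset.range n, (q (v k) - q 0) / v k :=
        Finset.sum_le_sum_of_subset_of_nonneg hn fun k _ _ =>
          div_nonneg (hq _ (hv k).le) (hv k).le
    _ ≤ 2 := sum_range_payment_div_le_two (q := fun r => q r - q 0) hy (sub_self _)
        (fun r hr r' hr' => by linarith [hic r hr r' hr']) hv hv_double n

end SingleBidder

section RandomSubset

variable {α : Type*} [DecidableEq α] {u : Finset α} {j k : α}

theorem two_mul_card_filter_mem_mem_le (hjk : j ≠ k) :
    2 * (u.powerset.filter fun s => k ∈ s ∧ j ∈ s).card ≤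
      (u.powerset.filter fun s => k ∈ s).card := by
  have herase : (u.powerset.filter fun s => k ∈ s ∧ j ∈ s).card ≤
      (u.powerset.filter fun s => k ∈ s ∧ j ∉ s).card := by
    refine Finset.card_le_card_of_injOn (Finset.erase · j) (fun s hs => ?_) fun s hs t ht => ?_
    · simp only [Finset.coe_filter, Finset.mem_powerset, mem_ofPred_eq] at hs ⊢
      exact ⟨(s.erase_subset j).trans hs.1, Finset.mem_erase.2 ⟨hjk.symm, hs.2.1⟩,
        s.notMem_erase j⟩
    · exact Finset.erase_injOn' j (Finset.mem_filter.1 hs).2.2 (Finset.mem_filter.1 ht).2.2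
  have hsplit := Finset.card_filter_add_card_filter_not
    (s := u.powerset.filter fun s => k ∈ s) fun s => j ∈ s
  rw [Finset.filter_filter, Finset.filter_filter] at hsplit
  omega

theorem card_powerset_filter_mem (hk : k ∈ u) :
    (u.powerset.filter fun s => k ∈ s).card = 2 ^ (u.card - 1) := by
  simpa [Finset.Icc_eq_filter_powerset] using
    Finset.card_Icc_finset (Finset.singleton_subset_iff.2 hk)

end RandomSubset

/-- An injective encoding of finite sets of naturals by reals in `(0, 1]`, through which the second
bidder's value carries the random set. -/
noncomputable def subsetSignal (s : Finset ℕ) : ℝ :=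
  ((Encodable.encode s : ℝ) + 1)⁻¹

theorem subsetSignal_injective : Function.Injective subsetSignal := fun s t h =>
  Encodable.encode_injective (by simpa [subsetSignal] using h)

theorem subsetSignal_nonneg (s : Finset ℕ) : 0 ≤ subsetSignal s := by
  unfold subsetSignal
  positivity

theorem subsetSignal_le_one (s : Finset ℕ) : subsetSignal s ≤ 1 :=
  inv_le_one_of_one_le₀ (by simp)

/-- The unnormalized distribution of type profiles: weight `2 ^ (-k)` at `(2 ^ k, subsetSignal s)`
for every exponent `k ≤ n` and every `s ⊆ {0, …, n}` containing `k`. -/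
noncomputable def subsetMeasure (n : ℕ) : Measure (ℝ × ℝ) :=
  ∑ k ∈ Finset.range (n + 1), (1 / 2 : NNReal) ^ k •
    ∑ s ∈ (Finset.range (n + 1)).powerset with k ∈ s, Measure.dirac (2 ^ k, subsetSignal s)

instance (n : ℕ) : IsFiniteMeasure (subsetMeasure n) := by
  unfold subsetMeasure
  infer_instance

theorem integrable_subsetMeasure (n : ℕ) (f : ℝ × ℝ → ℝ) : Integrable f (subsetMeasure n) :=
  integrable_finsetSum_measure.2 fun _ _ =>
    (integrable_finsetSum_measure.2 fun _ _ => integrable_dirac (by simp)).smul_measure_nnreal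

theorem integral_subsetMeasure (n : ℕ) (f : ℝ × ℝ → ℝ) :
    ∫ t, f t ∂subsetMeasure n = ∑ k ∈ Finset.range (n + 1), (1 / 2 : ℝ) ^ k *
      ∑ s ∈ (Finset.range (n + 1)).powerset with k ∈ s, f (2 ^ k, subsetSignal s) := by
  have hdirac (t : ℝ × ℝ) : Integrable f (Measure.dirac t) := integrable_dirac (by simp)
  rw [subsetMeasure, integral_finsetSum_measure fun k _ =>
    (integrable_finsetSum_measure.2 fun s _ => hdirac _).smul_measure_nnreal]
  refine Finset.sum_congr rfl fun k _ => ?_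
  rw [integral_smul_nnreal_measure, integral_finsetSum_measure fun s _ => hdirac _]
  simp [NNReal.smul_def]

theorem ae_subsetMeasure (n : ℕ) {P : ℝ × ℝ → Prop} (hP : ∀ k s, P (2 ^ k, subsetSignal s)) :
    ∀ᵐ t ∂subsetMeasure n, P t :=
  ae_finsetSum_measure_iff.2 fun k _ =>
    Measure.ae_smul_measure (ae_finsetSum_measure_iff.2 fun s _ => by simp [ae_dirac_eq, hP]) _

theorem ae_subsetMeasure_nonneg (n : ℕ) : ∀ᵐ t ∂subsetMeasure n, 0 ≤ t.1 ∧ 0 ≤ t.2 :=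
  ae_subsetMeasure n fun _ s => ⟨by positivity, subsetSignal_nonneg s⟩

theorem subsetMeasure_real_univ (n : ℕ) :
    (subsetMeasure n).real univ = (∑ k ∈ Finset.range (n + 1), (1 / 2 : ℝ) ^ k) * 2 ^ n := by
  have hcard {k : ℕ} (hk : k ∈ Finset.range (n + 1)) :
      ((Finset.range (n + 1)).powerset.filter fun s => k ∈ s).card = 2 ^ n := by
    simpa using card_powerset_filter_mem hk
  rw [← mul_one (Measure.real _ _), ← smul_eq_mul, ← integral_const, integral_subsetMeasure,
    Finset.sum_mul]
  refine Finset.sum_congr rfl fun k hk => ?_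
  rw [Finset.sum_const, hcard hk]
  simp

theorem subsetMeasure_ne_zero (n : ℕ) : subsetMeasure n ≠ 0 := by
  have hmass : 0 < (subsetMeasure n).real univ := by
    rw [subsetMeasure_real_univ, Finset.sum_range_succ']
    positivity
  intro h
  simp [h] at hmass

/-- The common prior: `subsetMeasure n` normalized to a probability measure. -/
noncomputable def subsetPrior (n : ℕ) : Measure (ℝ × ℝ) :=
  (subsetMeasure n univ)⁻¹ • subsetMeasure n

instance (n : ℕ) : IsProbabilityMeasure (subsetPrior n) :=
  have : NeZero (subsetMeasure n) := ⟨subsetMeasure_ne_zero n⟩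
  isProbabilityMeasureSMul

theorem integral_subsetPrior (n : ℕ) (f : ℝ × ℝ → ℝ) :
    ∫ t, f t ∂subsetPrior n = ((subsetMeasure n).real univ)⁻¹ * ∫ t, f t ∂subsetMeasure n :=
  average_eq (subsetMeasure n) f

/-- The profiles at which the first bidder gets the item: those at which the reported value is
`2 ^ k` for some `k` in the set encoded by the second coordinate. -/
def subsetWin : Set (ℝ × ℝ) :=
  (fun i : ℕ × Finset ℕ => ((2 : ℝ) ^ i.1, subsetSignal i.2)) '' {i | i.1 ∈ i.2}

theorem mk_mem_subsetWin {r : ℝ} {s : Finset ℕ} :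
    (r, subsetSignal s) ∈ subsetWin ↔ ∃ k ∈ s, 2 ^ k = r := by
  simp only [subsetWin, mem_image, mem_ofPred_eq, Prod.exists, Prod.mk.injEq,
    subsetSignal_injective.eq_iff]
  grind

/-- The probability, `0` or `1`, that the first bidder gets the item. -/
noncomputable def subsetAlloc : ℝ × ℝ → ℝ :=
  subsetWin.indicator 1

/-- The first bidder's payment: half the reported value upon winning. -/
noncomputable def subsetPayment (t : ℝ × ℝ) : ℝ :=
  t.1 / 2 * subsetAlloc t

theorem measurable_subsetAlloc : Measurable subsetAlloc :=
  measurable_one.indicator ((to_countable _).image _).measurableSet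

theorem measurable_subsetPayment : Measurable subsetPayment :=
  (measurable_fst.div_const 2).mul measurable_subsetAlloc

theorem subsetAlloc_nonneg (t : ℝ × ℝ) : 0 ≤ subsetAlloc t :=
  indicator_nonneg (fun _ _ => zero_le_one) t

theorem subsetAlloc_le_one (t : ℝ × ℝ) : subsetAlloc t ≤ 1 :=
  indicator_le_self' (fun _ _ => zero_le_one) t

theorem subsetAlloc_two_pow (k : ℕ) (s : Finset ℕ) :
    subsetAlloc (2 ^ k, subsetSignal s) = if k ∈ s then 1 else 0 := by
  have hwin : ((2 : ℝ) ^ k, subsetSignal s) ∈ subsetWin ↔ k ∈ s := by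
    simp [mk_mem_subsetWin, pow_right_inj₀]
  split_ifs with hk
  · exact indicator_of_mem (hwin.2 hk) _
  · exact indicator_of_notMem (mt hwin.1 hk) _

theorem subsetAlloc_eq_zero {r : ℝ} (hr : ∀ k : ℕ, 2 ^ k ≠ r) (s : Finset ℕ) :
    subsetAlloc (r, subsetSignal s) = 0 :=
  indicator_of_notMem (fun h => let ⟨k, _, hk⟩ := mk_mem_subsetWin.1 h; hr k hk) _

theorem sum_truthful_utility_eq (u : Finset ℕ) (k : ℕ) :
    ∑ s ∈ u.powerset with k ∈ s, (2 ^ k * subsetAlloc (2 ^ k, subsetSignal s) -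
      subsetPayment (2 ^ k, subsetSignal s)) =
      (u.powerset.filter fun s => k ∈ s).card * (2 ^ k / 2 : ℝ) := by
  rw [← nsmul_eq_mul, ← Finset.sum_const]
  refine Finset.sum_congr rfl fun s hs => ?_
  rw [subsetPayment, subsetAlloc_two_pow, if_pos (Finset.mem_filter.1 hs).2]
  ring

theorem sum_two_pow_misreport_utility_le (u : Finset ℕ) {j k : ℕ} (hjk : j ≠ k) :
    ∑ s ∈ u.powerset with k ∈ s, (2 ^ k * subsetAlloc (2 ^ j, subsetSignal s) -
      subsetPayment (2 ^ j, subsetSignal s)) ≤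
      (u.powerset.filter fun s => k ∈ s).card * (2 ^ k / 2 : ℝ) := by
  have hcard : 2 * ((u.powerset.filter fun s => k ∈ s ∧ j ∈ s).card : ℝ) ≤
      (u.powerset.filter fun s => k ∈ s).card := by
    exact_mod_cast two_mul_card_filter_mem_mem_le hjk
  calc ∑ s ∈ u.powerset with k ∈ s, (2 ^ k * subsetAlloc (2 ^ j, subsetSignal s) -
        subsetPayment (2 ^ j, subsetSignal s))
      ≤ ∑ s ∈ u.powerset with k ∈ s, 2 ^ k * subsetAlloc (2 ^ j, subsetSignal s) := by
        gcongr with s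
        exact sub_le_self _ (mul_nonneg (by positivity) (subsetAlloc_nonneg _))
    _ = (u.powerset.filter fun s => k ∈ s ∧ j ∈ s).card * 2 ^ k := by
        simp only [subsetAlloc_two_pow, mul_ite, mul_one, mul_zero]
        rw [← Finset.sum_filter, Finset.filter_filter, Finset.sum_const, nsmul_eq_mul]
    _ ≤ (u.powerset.filter fun s => k ∈ s).card * (2 ^ k / 2) := by
        linarith [mul_le_mul_of_nonneg_right hcard (by positivity : (0 : ℝ) ≤ 2 ^ k)]

theorem sum_misreport_utility_le (u : Finset ℕ) (k : ℕ) (r : ℝ) :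
    ∑ s ∈ u.powerset with k ∈ s, (2 ^ k * subsetAlloc (r, subsetSignal s) -
      subsetPayment (r, subsetSignal s)) ≤
      ∑ s ∈ u.powerset with k ∈ s, (2 ^ k * subsetAlloc (2 ^ k, subsetSignal s) -
        subsetPayment (2 ^ k, subsetSignal s)) := by
  by_cases hr : ∃ j : ℕ, 2 ^ j = r
  · obtain ⟨j, rfl⟩ := hr
    obtain rfl | hjk := eq_or_ne j k
    · exact le_rfl
    · exact (sum_two_pow_misreport_utility_le u hjk).trans_eq (sum_truthful_utility_eq u k).symm
  · have hlose := subsetAlloc_eq_zero (not_exists.1 hr)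
    rw [sum_truthful_utility_eq]
    simp only [subsetPayment, hlose, mul_zero, sub_zero, Finset.sum_const_zero]
    positivity

theorem integral_misreport_utility_le (n : ℕ) (σ : ℝ → ℝ) :
    ∫ t, (t.1 * subsetAlloc (σ t.1, t.2) - subsetPayment (σ t.1, t.2)) ∂subsetMeasure n ≤
      ∫ t, (t.1 * subsetAlloc t - subsetPayment t) ∂subsetMeasure n := by
  rw [integral_subsetMeasure, integral_subsetMeasure]
  refine Finset.sum_le_sum fun k _ => mul_le_mul_of_nonneg_left ?_ (by positivity)
  exact sum_misreport_utility_le (Finset.range (n + 1)) k (σ (2 ^ k))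

theorem integral_subsetPayment (n : ℕ) :
    ∫ t, subsetPayment t ∂subsetMeasure n = (n + 1) * 2 ^ n / 2 := by
  have hterm (k : ℕ) (hk : k ∈ Finset.range (n + 1)) : (1 / 2 : ℝ) ^ k *
      ∑ s ∈ (Finset.range (n + 1)).powerset with k ∈ s, subsetPayment (2 ^ k, subsetSignal s) =
        2 ^ n / 2 := by
    have hpay (s : Finset ℕ) (hs : s ∈ (Finset.range (n + 1)).powerset.filter fun s => k ∈ s) :
        subsetPayment (2 ^ k, subsetSignal s) = 2 ^ k / 2 := by
      simp [subsetPayment, subsetAlloc_two_pow, (Finset.mem_filter.1 hs).2]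
    rw [Finset.sum_congr rfl hpay, Finset.sum_const, card_powerset_filter_mem hk, one_div_pow]
    simp only [Finset.card_range, Nat.add_sub_cancel, nsmul_eq_mul, Nat.cast_pow, Nat.cast_ofNat]
    field_simp
  rw [integral_subsetMeasure, Finset.sum_congr rfl hterm]
  simp [mul_div_assoc]

theorem isFeasible_subsetAuction : IsFeasible subsetAlloc 0 := fun t _ _ =>
  ⟨subsetAlloc_nonneg t, le_rfl, by simpa using subsetAlloc_le_one t⟩

theorem isExPostIR_subsetAuction : IsExPostIR subsetAlloc 0 subsetPayment 0 := fun t h₁ _ => by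
  refine ⟨?_, by simp⟩
  rw [subsetPayment, ← sub_mul, sub_half]
  exact mul_nonneg (div_nonneg h₁ zero_le_two) (subsetAlloc_nonneg t)

theorem isBIC_subsetAuction (n : ℕ) :
    IsBIC (subsetPrior n) subsetAlloc 0 subsetPayment 0 := by
  refine ⟨fun σ _ _ => ?_, fun σ _ _ => by simp⟩
  rw [integral_subsetPrior, integral_subsetPrior]
  exact mul_le_mul_of_nonneg_left (integral_misreport_utility_le n σ) (by positivity)

theorem integral_fst_payment_le (n : ℕ) {y q : ℝ × ℝ → ℝ}
    (hy : ∀ t : ℝ × ℝ, 0 ≤ t.1 → 0 ≤ t.2 → y t ∈ Icc 0 1)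
    (hq : ∀ v₂ : ℝ, 0 ≤ v₂ → q (0, v₂) ≤ 0) (hic : IsFstDSIC y q) :
    ∫ t, q t ∂subsetMeasure n ≤ 4 * 2 ^ n := by
  have hfix (s : Finset ℕ) : ∑ k ∈ s, (1 / 2 : ℝ) ^ k * q (2 ^ k, subsetSignal s) ≤ 2 := by
    have hs := subsetSignal_nonneg s
    simpa [div_eq_inv_mul] using
      sum_payment_div_le_two (y := fun r => y (r, subsetSignal s))
        (q := fun r => q (r, subsetSignal s)) (v := fun k => 2 ^ k)
        (fun r hr => hy (r, _) hr hs) (hq _ hs) (fun r hr r' hr' => hic (r, _) hr hs r' hr')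
        (fun k => by positivity) (fun k => (pow_succ' 2 k).ge) s
  calc ∫ t, q t ∂subsetMeasure n
      = ∑ s ∈ (Finset.range (n + 1)).powerset, ∑ k ∈ s,
          (1 / 2 : ℝ) ^ k * q (2 ^ k, subsetSignal s) := by
        simp only [integral_subsetMeasure, Finset.mul_sum]
        refine Finset.sum_comm' fun k s => ?_
        simp only [Finset.mem_filter, Finset.mem_powerset]
        exact ⟨fun h => ⟨h.2.2, h.2.1⟩, fun h => ⟨h.2 h.1, h.2, h.1⟩⟩
    _ ≤ ∑ _s ∈ (Finset.range (n + 1)).powerset, 2 := Finset.sum_le_sum fun s _ => hfix s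
    _ = 4 * 2 ^ n := by
        simp only [Finset.sum_const, Finset.card_powerset, Finset.card_range, nsmul_eq_mul]
        push_cast
        ring

theorem integral_snd_payment_le (n : ℕ) {q : ℝ × ℝ → ℝ}
    (hq : ∀ t : ℝ × ℝ, 0 ≤ t.1 → 0 ≤ t.2 → q t ≤ t.2) :
    ∫ t, q t ∂subsetMeasure n ≤ 2 * 2 ^ n := by
  have hq_le_one : ∀ᵐ t ∂subsetMeasure n, q t ≤ 1 := ae_subsetMeasure n fun k s =>
    (hq (_, _) (by positivity) (subsetSignal_nonneg s)).trans (subsetSignal_le_one s)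
  calc ∫ t, q t ∂subsetMeasure n
      ≤ ∫ _, 1 ∂subsetMeasure n :=
        integral_mono_ae (integrable_subsetMeasure n q) (integrable_subsetMeasure n _) hq_le_one
    _ = (∑ k ∈ Finset.range (n + 1), (1 / 2 : ℝ) ^ k) * 2 ^ n := by
        rw [integral_const, smul_eq_mul, mul_one, subsetMeasure_real_univ]
    _ ≤ 2 * 2 ^ n := by
        gcongr
        exact sum_geometric_two_le _

theorem integral_subsetMeasure_revenue_le (n : ℕ) {y₁ y₂ q₁ q₂ : ℝ × ℝ → ℝ}
    (hfeas : IsFeasible y₁ y₂) (hir : IsExPostIR y₁ y₂ q₁ q₂) (hic : IsFstDSIC y₁ q₁) :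
    ∫ t, (q₁ t + q₂ t) ∂subsetMeasure n ≤ 6 * 2 ^ n := by
  have hy₁ (t : ℝ × ℝ) (h₁ : 0 ≤ t.1) (h₂ : 0 ≤ t.2) : y₁ t ∈ Icc 0 1 := by
    obtain ⟨hy₁, hy₂, hsum⟩ := hfeas t h₁ h₂
    exact ⟨hy₁, by linarith⟩
  have hq₁ (v₂ : ℝ) (h₂ : 0 ≤ v₂) : q₁ (0, v₂) ≤ 0 := by
    simpa using (hir (0, v₂) le_rfl h₂).1
  have hq₂ (t : ℝ × ℝ) (h₁ : 0 ≤ t.1) (h₂ : 0 ≤ t.2) : q₂ t ≤ t.2 := by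
    obtain ⟨hy₁, -, hsum⟩ := hfeas t h₁ h₂
    linarith [(hir t h₁ h₂).2, mul_le_of_le_one_right h₂ (by linarith : y₂ t ≤ 1)]
  rw [integral_add (integrable_subsetMeasure n q₁) (integrable_subsetMeasure n q₂)]
  linarith [integral_fst_payment_le n hy₁ hq₁ hic, integral_snd_payment_le n hq₂]

theorem mul_integral_subsetPrior_revenue_le {M : ℝ} (hM : 0 ≤ M) {n : ℕ} (hn : 12 * M ≤ n)
    {y₁ y₂ q₁ q₂ : ℝ × ℝ → ℝ} (hfeas : IsFeasible y₁ y₂) (hir : IsExPostIR y₁ y₂ q₁ q₂)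
    (hic : IsFstDSIC y₁ q₁) :
    M * ∫ t, (q₁ t + q₂ t) ∂subsetPrior n ≤ ∫ t, subsetPayment t ∂subsetPrior n := by
  rw [integral_subsetPrior, integral_subsetPrior, mul_left_comm]
  refine mul_le_mul_of_nonneg_left ?_ (by positivity)
  calc M * ∫ t, (q₁ t + q₂ t) ∂subsetMeasure n
      ≤ M * (6 * 2 ^ n) := by gcongr; exact integral_subsetMeasure_revenue_le n hfeas hir hic
    _ = 12 * M * 2 ^ n / 2 := by ring
    _ ≤ (n + 1) * 2 ^ n / 2 := by gcongr; linarith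
    _ = ∫ t, subsetPayment t ∂subsetMeasure n := (integral_subsetPayment n).symm

theorem exists_correlated_instance_bic_revenue_ge_mul_dsic_general (M : ℝ) (hM : 0 < M) :
    ∃ D : Measure (ℝ × ℝ), IsProbabilityMeasure D ∧ (∀ᵐ t ∂D, 0 ≤ t.1 ∧ 0 ≤ t.2) ∧
      ∃ x₁ x₂ p₁ p₂ : ℝ × ℝ → ℝ,
        Measurable x₁ ∧ Measurable x₂ ∧ Measurable p₁ ∧ Measurable p₂ ∧
        IsFeasible x₁ x₂ ∧ IsExPostIR x₁ x₂ p₁ p₂ ∧ IsBIC D x₁ x₂ p₁ p₂ ∧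
        ∀ y₁ y₂ q₁ q₂ : ℝ × ℝ → ℝ,
          IsFeasible y₁ y₂ → IsExPostIR y₁ y₂ q₁ q₂ → IsFstDSIC y₁ q₁ →
          M * ∫ t, (q₁ t + q₂ t) ∂D ≤ ∫ t, (p₁ t + p₂ t) ∂D := by
  obtain ⟨n, hn⟩ := exists_nat_ge (12 * M)
  refine ⟨subsetPrior n, inferInstance, Measure.ae_smul_measure (ae_subsetMeasure_nonneg n) _,
    subsetAlloc, 0, subsetPayment, 0, measurable_subsetAlloc, measurable_zero,
    measurable_subsetPayment, measurable_zero, isFeasible_subsetAuction,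
    isExPostIR_subsetAuction, isBIC_subsetAuction n, fun y₁ y₂ q₁ q₂ hfeas hir hic => ?_⟩
  simpa using mul_integral_subsetPrior_revenue_le hM.le hn hfeas hir hic

/-- **Unbounded gap between BIC and DSIC revenue in correlated two-bidder auctions.**
For every `M > 0` there exists a two-bidder single-item auction instance with correlated
values — a joint distribution `D` on type pairs in `ℝ_{≥0} × ℝ_{≥0}` — such that the
supremum of revenue over Bayesian incentive compatible, ex post individually rational
auctions is at least `M` times the supremum of revenue over dominant strategy incentive
compatible, ex post individually rational auctions.  (This is expressed by exhibiting one
BIC, ex post IR auction whose revenue is at least `M` times the revenue of every DSIC,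
ex post IR auction.) -/
theorem exists_correlated_instance_bic_revenue_ge_mul_dsic (M : ℝ) (hM : 0 < M) :
    ∃ D : Measure (ℝ × ℝ), IsProbabilityMeasure D ∧
      (∀ᵐ t ∂D, 0 ≤ t.1 ∧ 0 ≤ t.2) ∧
      ∃ x₁ x₂ p₁ p₂ : ℝ × ℝ → ℝ,
        Measurable x₁ ∧ Measurable x₂ ∧ Measurable p₁ ∧ Measurable p₂ ∧
        -- feasibility
        (∀ t : ℝ × ℝ, 0 ≤ t.1 → 0 ≤ t.2 →
          0 ≤ x₁ t ∧ 0 ≤ x₂ t ∧ x₁ t + x₂ t ≤ 1) ∧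
        -- ex post individual rationality
        (∀ t : ℝ × ℝ, 0 ≤ t.1 → 0 ≤ t.2 →
          0 ≤ t.1 * x₁ t - p₁ t ∧ 0 ≤ t.2 * x₂ t - p₂ t) ∧
        -- Bayesian incentive compatibility, expressed via deviation strategies:
        -- no measurable misreporting strategy of either bidder is profitable in expectation
        (∀ σ : ℝ → ℝ, Measurable σ → (∀ v, 0 ≤ σ v) →
          (∫ t, (t.1 * x₁ (σ t.1, t.2) - p₁ (σ t.1, t.2)) ∂D) ≤
            ∫ t, (t.1 * x₁ t - p₁ t) ∂D) ∧
        (∀ σ : ℝ → ℝ, Measurable σ → (∀ v, 0 ≤ σ v) →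
          (∫ t, (t.2 * x₂ (t.1, σ t.2) - p₂ (t.1, σ t.2)) ∂D) ≤
            ∫ t, (t.2 * x₂ t - p₂ t) ∂D) ∧
        -- the revenue of this BIC auction is at least M times that of every DSIC auction
        ∀ y₁ y₂ q₁ q₂ : ℝ × ℝ → ℝ,
          Measurable y₁ → Measurable y₂ → Measurable q₁ → Measurable q₂ →
          -- feasibility
          (∀ t : ℝ × ℝ, 0 ≤ t.1 → 0 ≤ t.2 →
            0 ≤ y₁ t ∧ 0 ≤ y₂ t ∧ y₁ t + y₂ t ≤ 1) →
          -- ex post individual rationality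
          (∀ t : ℝ × ℝ, 0 ≤ t.1 → 0 ≤ t.2 →
            0 ≤ t.1 * y₁ t - q₁ t ∧ 0 ≤ t.2 * y₂ t - q₂ t) →
          -- dominant strategy incentive compatibility
          (∀ t : ℝ × ℝ, 0 ≤ t.1 → 0 ≤ t.2 → ∀ v' : ℝ, 0 ≤ v' →
            t.1 * y₁ (v', t.2) - q₁ (v', t.2) ≤ t.1 * y₁ t - q₁ t) →
          (∀ t : ℝ × ℝ, 0 ≤ t.1 → 0 ≤ t.2 → ∀ v' : ℝ, 0 ≤ v' →
            t.2 * y₂ (t.1, v') - q₂ (t.1, v') ≤ t.2 * y₂ t - q₂ t) →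
          M * ∫ t, (q₁ t + q₂ t) ∂D ≤ ∫ t, (p₁ t + p₂ t) ∂D := by
  obtain ⟨D, hD, hnonneg, x₁, x₂, p₁, p₂, hx₁, hx₂, hp₁, hp₂, hfeas, hir, ⟨hbic₁, hbic₂⟩, hgap⟩ :=
    exists_correlated_instance_bic_revenue_ge_mul_dsic_general M hM
  exact ⟨D, hD, hnonneg, x₁, x₂, p₁, p₂, hx₁, hx₂, hp₁, hp₂, hfeas, hir, hbic₁, hbic₂,
    fun y₁ y₂ q₁ q₂ _ _ _ _ hy hirq hic₁ _ => hgap y₁ y₂ q₁ q₂ hy hirq hic₁⟩
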